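/- Let G = C_2^2 ⊕ G_p where G_p is a finite abelian p-group for an odd prime p. Then K(G) = K*(G). -/

import Mathlib

open Multiset Pointwise

/-- Cross number of a sequence (multiset) over an additive group. -/
noncomputable def crossNum {G : Type*} [AddCommGroup G] (S : Multiset G) : ℚ :=
  (S.map (fun g => (1 : ℚ) / (addOrderOf g : ℚ))).sum

/-- A sequence is zero-sum free if no non-empty subsequence sums to zero. -/
def IsZeroSumFree {G : Type*} [AddCommGroup G] (S : Multiset G) : Prop :=
  ∀ T : Multiset G, T ≤ S → T ≠ 0 → T.sum ≠ (0 : G)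

/-- A minimal zero-sum sequence: non-trivial, sum zero, no proper non-trivial
zero-sum subsequence. -/
def IsMinZeroSum {G : Type*} [AddCommGroup G] (S : Multiset G) : Prop :=
  S ≠ 0 ∧ S.sum = 0 ∧ ∀ T : Multiset G, T < S → T ≠ 0 → T.sum ≠ (0 : G)

/-- `wSet G` : set of cross numbers of non-trivial zero-sum free sequences over `G`. -/
def wSet (G : Type*) [AddCommGroup G] : Set ℚ :=
  { k | ∃ S : Multiset G, S ≠ 0 ∧ IsZeroSumFree S ∧ crossNum S = k }

/-- `WSet G` : set of cross numbers of minimal zero-sum sequences over `G`. -/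
def WSet (G : Type*) [AddCommGroup G] : Set ℚ :=
  { k | ∃ S : Multiset G, IsMinZeroSum S ∧ crossNum S = k }

/-!
A basis of `G` attains `K*(G)`: repeat each basis element `e` one time fewer than its order and
add the negative of the sum of all these terms.

For the upper bound over a `p`-group `H`, filter the group algebra of `H` over `𝔽_p` by giving
`1 - X^e` weight `1 / ord e` for the elements `e` of a basis. Then `1 - X^g` has weight at least
`1 / ord g`, products of weight above `k*(H)` vanish, and `∏ (1 - X^g)` over a zero-sum free
sequence has constant coefficient `1`; hence the cross number of such a sequence is at most
`k*(H)`. In a minimal zero-sum sequence, replacing a term of maximal order by `q - 1` copies of an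
element of order `exp H`, where `q` is the quotient of the two orders, leaves a zero-sum free
sequence; this gives `K(H) ≤ 1 / exp H + k*(H)`.

For `C₂² ⊕ H` with `p` odd, merge the terms of a minimal zero-sum sequence into blocks whose sums
lie in `H`: the result is a minimal zero-sum sequence over `H`. Group the terms by their component
in `C₂²` and pair equal components in order of decreasing `1 / ord`, which is an ultrametric
weight on `H`; an odd number of terms in each nonzero class leaves one triple. A single such
pairing loses too much, but the average of the pairing of all terms with the one made after
splitting off the heaviest term of each nonzero class gives exactly the bound.
-/

section CrossNum

variable {G H : Type*} [AddCommGroup G] [AddCommGroup H]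

theorem crossNum_cons (g : G) (S : Multiset G) :
    crossNum (g ::ₘ S) = 1 / (addOrderOf g : ℚ) + crossNum S := by
  simp [crossNum]

theorem crossNum_add (S T : Multiset G) : crossNum (S + T) = crossNum S + crossNum T := by
  simp [crossNum]

theorem crossNum_replicate (n : ℕ) (g : G) :
    crossNum (replicate n g) = n / (addOrderOf g : ℚ) := by
  simp [crossNum, div_eq_mul_inv]

theorem crossNum_map {f : G →+ H} (hf : Function.Injective f) (S : Multiset G) :
    crossNum (S.map f) = crossNum S := by
  simp [crossNum, Multiset.map_map, addOrderOf_injective f hf]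

theorem IsMinZeroSum.of_map {f : G →+ H} (hf : Function.Injective f) {S : Multiset G}
    (h : IsMinZeroSum (S.map f)) : IsMinZeroSum S := by
  obtain ⟨hne, hsum, hmin⟩ := h
  refine ⟨by simpa using hne, hf ?_, fun T hT hT0 hTsum => ?_⟩
  · rw [map_multiset_sum, hsum, _root_.map_zero]
  · refine hmin (T.map f) (Multiset.map_lt_map hT) (by simpa using hT0) ?_
    rw [← map_multiset_sum, hTsum, _root_.map_zero]

theorem WSet_subset_of_addEquiv (e : G ≃+ H) : WSet G ⊆ WSet H := by
  rintro _ ⟨S, hS, rfl⟩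
  refine ⟨S.map e, .of_map (f := e.symm.toAddMonoidHom) e.symm.injective ?_,
    crossNum_map (f := e.toAddMonoidHom) e.injective S⟩
  simpa [Multiset.map_map] using hS

theorem WSet_congr (e : G ≃+ H) : WSet G = WSet H :=
  (WSet_subset_of_addEquiv e).antisymm (WSet_subset_of_addEquiv e.symm)

theorem IsMinZeroSum.isZeroSumFree_of_cons {g : G} {S : Multiset G}
    (h : IsMinZeroSum (g ::ₘ S)) : IsZeroSumFree S :=
  fun T hT => h.2.2 T (hT.trans_lt (lt_cons_self S g))

theorem IsZeroSumFree.mono {S T : Multiset G} (hS : IsZeroSumFree S) (hT : T ≤ S) :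
    IsZeroSumFree T :=
  fun V hV => hS V (hV.trans hT)

theorem IsZeroSumFree.isMinZeroSum_cons {S : Multiset G} (hS : IsZeroSumFree S) :
    IsMinZeroSum (-S.sum ::ₘ S) := by
  refine ⟨by simp, by simp, fun T hT hT0 hTsum => ?_⟩
  by_cases hmem : -S.sum ∈ T
  · obtain ⟨T', rfl⟩ := Multiset.exists_cons_of_mem hmem
    obtain ⟨V, rfl⟩ := Multiset.le_iff_exists_add.1 (Multiset.cons_lt_cons_iff.1 hT).le
    refine hS V (Multiset.le_add_left _ _) (by rintro rfl; simp at hT) ?_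
    simpa using hTsum
  · exact hS T ((Multiset.le_cons_of_notMem hmem).1 hT.le) hT0 hTsum

theorem exists_eq_add_of_le_add {α : Type*} {T A B : Multiset α} (h : T ≤ A + B) :
    ∃ A' ≤ A, ∃ B' ≤ B, T = A' + B' := by
  classical
  refine ⟨T ∩ A, Multiset.inter_le_right, T - A, tsub_le_iff_left.2 h, ?_⟩
  rw [add_comm, Multiset.sub_add_inter]

theorem IsZeroSumFree.replicate_add {S : Multiset G} (hS : IsZeroSumFree S) {N q : ℕ}
    (hN : N ≠ 0) (hSN : ∀ g ∈ S, N • g = 0) {x : G} (hx : addOrderOf x = N * q) :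
    IsZeroSumFree (replicate (q - 1) x + S) := by
  intro T hT hT0 hTsum
  obtain ⟨A, hA, B, hB, rfl⟩ := exists_eq_add_of_le_add hT
  obtain ⟨j, hj, rfl⟩ := Multiset.le_replicate_iff.1 hA
  rw [Multiset.sum_add, Multiset.sum_replicate] at hTsum
  have hNB : N • B.sum = 0 := by
    rw [Multiset.smul_sum]
    refine Multiset.sum_eq_zero fun y hy => ?_
    obtain ⟨g, hg, rfl⟩ := Multiset.mem_map.1 hy
    exact hSN g (Multiset.mem_of_le hB hg)
  have hNj : (N * j) • x = 0 := by
    simpa [smul_add, hNB, mul_smul] using congrArg (N • ·) hTsum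
  have hqj : q ∣ j := by
    rw [← addOrderOf_dvd_iff_nsmul_eq_zero, hx] at hNj
    exact Nat.dvd_of_mul_dvd_mul_left (Nat.pos_of_ne_zero hN) hNj
  obtain rfl : j = 0 := by
    by_contra hj0
    have := Nat.le_of_dvd (Nat.pos_of_ne_zero hj0) hqj
    omega
  simp only [Multiset.replicate_zero, zero_add, zero_smul] at hT0 hTsum
  exact hS B hB hT0 hTsum

end CrossNum

section Independent

variable {ι κ G H : Type*} [Fintype ι] [Fintype κ] [AddCommGroup G] [AddCommGroup H]

/-- Independence of a family in an abelian group, as in the notion of a basis of a finite abelian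
group: the cyclic subgroups generated by its members form a direct sum. Coefficients in `ℕ`
lose nothing because the members are meant to have finite order. -/
def IsIndependent (b : ι → G) : Prop :=
  ∀ m : ι → ℕ, ∑ i, m i • b i = 0 → ∀ i, addOrderOf (b i) ∣ m i

/-- A basis of a finite abelian group `G`, exhibiting `G` as the direct sum of the cyclic subgroups
generated by its members. -/
structure IsBasis (b : ι → G) : Prop where
  isIndependent : IsIndependent b
  exists_sum_eq : ∀ g, ∃ c : ι → ℕ, ∑ i, c i • b i = g

/-- The invariant `k*` of a direct sum of cyclic groups of orders `q i`. -/
def kStar (q : ι → ℕ) : ℚ :=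
  ∑ i, ((q i : ℚ) - 1) / q i

theorem IsIndependent.addOrderOf_nsmul_dvd {b : ι → G} (hb : IsIndependent b) (c : ι → ℕ)
    (i : ι) : addOrderOf (c i • b i) ∣ addOrderOf (∑ j, c j • b j) := by
  set N := addOrderOf (∑ j, c j • b j) with hN
  have hzero : ∑ j, (N * c j) • b j = 0 := by
    simp only [mul_smul, ← Finset.smul_sum, hN, addOrderOf_nsmul_eq_zero]
  apply addOrderOf_dvd_of_nsmul_eq_zero
  rw [← mul_smul]
  exact addOrderOf_dvd_iff_nsmul_eq_zero.1 (hb _ hzero i)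

theorem IsBasis.addOrderOf_sum {b : ι → G} (hb : IsBasis b) :
    addOrderOf (∑ i, b i) = AddMonoid.exponent G := by
  refine (AddMonoid.addOrder_dvd_exponent _).antisymm
    (AddMonoid.exponent_dvd_of_forall_nsmul_eq_zero fun g => ?_)
  obtain ⟨c, rfl⟩ := hb.exists_sum_eq g
  rw [Finset.smul_sum]
  refine Finset.sum_eq_zero fun i _ => ?_
  have hdvd : addOrderOf (b i) ∣ addOrderOf (∑ i, b i) := by
    simpa using hb.isIndependent.addOrderOf_nsmul_dvd 1 i
  rw [smul_comm, addOrderOf_dvd_iff_nsmul_eq_zero.1 hdvd, smul_zero]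

theorem IsBasis.sumElim {b : ι → G} {c : κ → H} (hb : IsBasis b) (hc : IsBasis c) :
    IsBasis (Sum.elim (fun i => (b i, 0)) (fun j => (0, c j)) : ι ⊕ κ → G × H) := by
  refine ⟨fun m hm => ?_, fun g => ?_⟩
  · have hfst : ∑ i, m (.inl i) • b i = 0 := by
      simpa [Fintype.sum_sum_type, Prod.fst_sum] using congrArg Prod.fst hm
    have hsnd : ∑ j, m (.inr j) • c j = 0 := by
      simpa [Fintype.sum_sum_type, Prod.snd_sum] using congrArg Prod.snd hm
    rintro (i | j)
    · simpa [Prod.addOrderOf] using hb.isIndependent _ hfst i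
    · simpa [Prod.addOrderOf] using hc.isIndependent _ hsnd j
  · obtain ⟨m, hm⟩ := hb.exists_sum_eq g.1
    obtain ⟨n, hn⟩ := hc.exists_sum_eq g.2
    refine ⟨Sum.elim m n, ?_⟩
    ext <;> simp [Fintype.sum_sum_type, Prod.fst_sum, Prod.snd_sum, hm, hn]

theorem kStar_sumElim (b : ι → G) (c : κ → H) :
    kStar (fun i => addOrderOf
      (Sum.elim (fun i => (b i, 0)) (fun j => (0, c j)) i : G × H)) =
        kStar (fun i => addOrderOf (b i)) + kStar (fun j => addOrderOf (c j)) := by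
  simp [kStar, Fintype.sum_sum_type, Prod.addOrderOf]

theorem isBasis_one (n : ℕ) [NeZero n] : IsBasis fun _ : Unit => (1 : ZMod n) where
  isIndependent m hm i := by simpa [ZMod.natCast_eq_zero_iff] using hm
  exists_sum_eq g := ⟨fun _ => g.val, by simp⟩

theorem sum_nsmul_single_one [DecidableEq ι] {R : ι → Type*} [∀ i, Ring (R i)] (m : ι → ℕ) :
    ∑ i, m i • (Pi.single i 1 : ∀ i, R i) = fun i => (m i : R i) := by
  ext i
  rw [Finset.sum_apply, Finset.sum_eq_single i] <;> simp +contextual [Pi.single_eq_of_ne']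

theorem addOrderOf_piSingle {α : Type*} [DecidableEq α] {M : α → Type*} [∀ i, AddMonoid (M i)]
    (i : α) (x : M i) : addOrderOf (Pi.single i x : ∀ i, M i) = addOrderOf x :=
  addOrderOf_injective (AddMonoidHom.single M i) (Pi.single_injective i) x

theorem isBasis_piSingle_one [DecidableEq ι] (q : ι → ℕ) [∀ i, NeZero (q i)] :
    IsBasis fun i => (Pi.single i 1 : ∀ i, ZMod (q i)) where
  isIndependent m hm i := by
    rw [sum_nsmul_single_one] at hm
    rw [addOrderOf_piSingle, ZMod.addOrderOf_one, ← ZMod.natCast_eq_zero_iff]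
    exact congrFun hm i
  exists_sum_eq g := ⟨fun i => (g i).val, by rw [sum_nsmul_single_one]; simp⟩

theorem sum_map_eq_sum_count [DecidableEq ι] (M : Multiset ι) (f : ι → G) :
    (M.map f).sum = ∑ i, M.count i • f i := by
  rw [Finset.sum_multiset_map_count]
  exact Finset.sum_subset (Finset.subset_univ _) fun i _ hi => by
    rw [Multiset.count_eq_zero.2 (by simpa using hi), zero_smul]

theorem exists_le_map_eq_of_le_map {α β : Type*} {f : α → β} {M : Multiset α} {T : Multiset β}
    (h : T ≤ M.map f) : ∃ N ≤ M, N.map f = T := by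
  induction M, T using Quotient.inductionOn₂ with
  | h l t =>
    obtain ⟨w, hperm, hsub⟩ := Multiset.coe_le.1 h
    obtain ⟨l', hl', rfl⟩ := List.sublist_map_iff.1 hsub
    exact ⟨l', Multiset.coe_le.2 hl'.subperm, Multiset.coe_eq_coe.2 hperm⟩

theorem IsIndependent.isZeroSumFree_map [DecidableEq ι] {b : ι → G} (hb : IsIndependent b)
    {M : Multiset ι} (hM : ∀ i, M.count i < addOrderOf (b i)) : IsZeroSumFree (M.map b) := by
  intro T hT hT0 hTsum
  obtain ⟨N, hN, rfl⟩ := exists_le_map_eq_of_le_map hT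
  rw [sum_map_eq_sum_count] at hTsum
  have hcount (i : ι) : N.count i = 0 :=
    Nat.eq_zero_of_dvd_of_lt (hb _ hTsum i) ((Multiset.count_le_of_le i hN).trans_lt (hM i))
  exact hT0 (by simpa using Multiset.eq_zero_of_forall_notMem fun i =>
    Multiset.count_eq_zero.1 (hcount i))

theorem IsBasis.mem_WSet [Finite G] {b : ι → G} (hb : IsBasis b) :
    1 / (AddMonoid.exponent G : ℚ) + kStar (fun i => addOrderOf (b i)) ∈ WSet G := by
  classical
  have hpos (i : ι) : 0 < addOrderOf (b i) := addOrderOf_pos (b i)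
  set M : Multiset ι := ∑ i, replicate (addOrderOf (b i) - 1) i
  have hcount (i : ι) : M.count i = addOrderOf (b i) - 1 := by
    simp [M, Multiset.count_sum', Multiset.count_replicate]
  have hsum : -(M.map b).sum = ∑ i, b i := by
    rw [neg_eq_iff_add_eq_zero, sum_map_eq_sum_count, ← Finset.sum_add_distrib]
    refine Finset.sum_eq_zero fun i _ => ?_
    rw [hcount, ← succ_nsmul, Nat.sub_add_cancel (hpos i), addOrderOf_nsmul_eq_zero]
  have hcross : crossNum (M.map b) = kStar fun i => addOrderOf (b i) := by
    rw [crossNum, Multiset.map_map, sum_map_eq_sum_count]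
    refine Finset.sum_congr rfl fun i _ => ?_
    rw [hcount, nsmul_eq_mul, Nat.cast_pred (hpos i), Function.comp_apply, mul_one_div]
  have hfree : IsZeroSumFree (M.map b) :=
    hb.isIndependent.isZeroSumFree_map fun i => by rw [hcount]; exact Nat.pred_lt (hpos i).ne'
  exact ⟨_, hfree.isMinZeroSum_cons, by rw [crossNum_cons, hsum, hcross, hb.addOrderOf_sum]⟩

end Independent

section GroupAlgebra

variable {ι H : Type*} [AddCommGroup H] (R : Type*) [CommRing R]

/-- The element `1 - X^g` of the group algebra of `H` over `R`. -/
noncomputable def oneSub (g : H) : AddMonoidAlgebra R H :=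
  1 - AddMonoidAlgebra.single g 1

theorem oneSub_zero : oneSub R (0 : H) = 0 := by
  simp [oneSub, AddMonoidAlgebra.one_def]

theorem oneSub_add (g h : H) :
    oneSub R (g + h) = oneSub R g + AddMonoidAlgebra.single g 1 * oneSub R h := by
  simp [oneSub, mul_sub, AddMonoidAlgebra.single_mul_single]

theorem oneSub_pow_char_pow (p : ℕ) [Fact p.Prime] [CharP R p] (g : H) (a : ℕ) :
    oneSub R g ^ p ^ a = oneSub R (p ^ a • g) := by
  have : CharP (AddMonoidAlgebra R H) p :=
    charP_of_injective_ringHom (f := AddMonoidAlgebra.singleZeroRingHom)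
      (fun x y h => by simpa using congrArg (fun z => z.coeff 0) h) p
  rw [oneSub, oneSub, sub_pow_char_pow, one_pow, AddMonoidAlgebra.single_pow, one_pow]

variable {R}

theorem oneSub_nsmul_mem {I : Ideal (AddMonoidAlgebra R H)} {g : H} (hg : oneSub R g ∈ I)
    (n : ℕ) : oneSub R (n • g) ∈ I := by
  induction n with
  | zero => simp [oneSub_zero]
  | succ n ih =>
    rw [succ_nsmul, oneSub_add]
    exact I.add_mem ih (I.mul_mem_left _ hg)

theorem oneSub_sum_mem {I : Ideal (AddMonoidAlgebra R H)} {t : Finset ι} {f : ι → H}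
    (hf : ∀ i ∈ t, oneSub R (f i) ∈ I) : oneSub R (∑ i ∈ t, f i) ∈ I := by
  refine Finset.sum_induction _ (fun g => oneSub R g ∈ I) (fun g h hg hh => ?_) ?_ hf
  · rw [oneSub_add]
    exact I.add_mem hg (I.mul_mem_left _ hh)
  · simp [oneSub_zero]

theorem coeff_oneSub_mul (g x : H) (y : AddMonoidAlgebra R H) :
    (oneSub R g * y).coeff x = y.coeff x - y.coeff (-g + x) := by
  simp [oneSub, sub_mul]

theorem exists_le_sum_eq_of_coeff_prod_oneSub_ne_zero {S : Multiset H} {x : H}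
    (hx : (S.map (oneSub R)).prod.coeff x ≠ 0) : ∃ T ≤ S, T.sum = x := by
  induction S using Multiset.induction_on generalizing x with
  | empty =>
    refine ⟨0, le_rfl, ?_⟩
    contrapose! hx
    simpa [AddMonoidAlgebra.one_def] using Finsupp.single_eq_of_ne hx.symm
  | cons g S ih =>
    rw [Multiset.map_cons, Multiset.prod_cons, coeff_oneSub_mul] at hx
    by_cases h0 : (S.map (oneSub R)).prod.coeff x = 0
    · obtain ⟨T, hT, hTx⟩ := ih (x := -g + x) (by simpa [h0] using hx)
      exact ⟨g ::ₘ T, Multiset.cons_le_cons _ hT, by simp [hTx]⟩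
    · obtain ⟨T, hT, hTx⟩ := ih h0
      exact ⟨T, hT.trans (Multiset.le_cons_self _ _), hTx⟩

theorem IsZeroSumFree.coeff_prod_oneSub_zero {S : Multiset H} (hS : IsZeroSumFree S) :
    (S.map (oneSub R)).prod.coeff 0 = 1 := by
  induction S using Multiset.induction_on with
  | empty => simp [AddMonoidAlgebra.one_def]
  | cons g S ih =>
    have hneg : (S.map (oneSub R)).prod.coeff (-g) = 0 := by
      by_contra h
      obtain ⟨T, hT, hTg⟩ := exists_le_sum_eq_of_coeff_prod_oneSub_ne_zero h
      exact hS (g ::ₘ T) (Multiset.cons_le_cons _ hT) (by simp) (by simp [hTg])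
    rw [Multiset.map_cons, Multiset.prod_cons, coeff_oneSub_mul, add_zero, hneg, sub_zero,
      ih (hS.mono (Multiset.le_cons_self _ _))]

theorem IsZeroSumFree.prod_oneSub_ne_zero [Nontrivial R] {S : Multiset H}
    (hS : IsZeroSumFree S) : (S.map (oneSub R)).prod ≠ 0 := fun h => by
  have := hS.coeff_prod_oneSub_zero (R := R)
  simp [h] at this

variable [Fintype ι]

variable (R) in
/-- The filtration of the group algebra by powers of the elements `1 - X^(b i)`, in which
`1 - X^(b i)` has weight `1 / addOrderOf (b i)`. -/
noncomputable def weightIdeal (b : ι → H) (w : ℚ) : Ideal (AddMonoidAlgebra R H) :=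
  Ideal.span {x | ∃ m : ι → ℕ, w ≤ ∑ i, (m i : ℚ) / addOrderOf (b i) ∧
    x = ∏ i, oneSub R (b i) ^ m i}

theorem weightIdeal_antitone (b : ι → H) : Antitone (weightIdeal R b) := fun _ _ h =>
  Ideal.span_mono fun _ ⟨m, hm, hx⟩ => ⟨m, h.trans hm, hx⟩

theorem one_mem_weightIdeal_zero (b : ι → H) : 1 ∈ weightIdeal R b 0 :=
  Ideal.subset_span ⟨0, by simp, by simp⟩

theorem mul_mem_weightIdeal_add {b : ι → H} {v w : ℚ} {x y : AddMonoidAlgebra R H}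
    (hx : x ∈ weightIdeal R b v) (hy : y ∈ weightIdeal R b w) :
    x * y ∈ weightIdeal R b (v + w) := by
  have hxy := Ideal.mul_mem_mul hx hy
  rw [weightIdeal, weightIdeal, Ideal.span_mul_span'] at hxy
  refine Ideal.span_mono ?_ hxy
  rintro _ ⟨_, ⟨m, hm, rfl⟩, _, ⟨m', hm', rfl⟩, rfl⟩
  refine ⟨m + m', ?_, by simp [pow_add, Finset.prod_mul_distrib]⟩
  simpa [add_div, Finset.sum_add_distrib] using add_le_add hm hm'

theorem oneSub_pow_mem_weightIdeal (b : ι → H) (i : ι) (n : ℕ) :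
    oneSub R (b i) ^ n ∈ weightIdeal R b (n / addOrderOf (b i)) := by
  classical
  refine Ideal.subset_span ⟨Pi.single i n, le_of_eq ?_, ?_⟩
  · rw [Finset.sum_eq_single i] <;> simp +contextual
  · rw [Finset.prod_eq_single i] <;> simp +contextual

end GroupAlgebra

section PGroup

variable {ι H : Type*} [Fintype ι] [AddCommGroup H] {p : ℕ} [Fact p.Prime]

theorem exists_addOrderOf_eq_pow (hH : IsPGroup p (Multiplicative H)) (g : H) :
    ∃ a : ℕ, addOrderOf g = p ^ a := by
  simpa [orderOf_ofAdd_eq_addOrderOf] using IsPGroup.iff_orderOf.1 hH (.ofAdd g)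

theorem addOrderOf_pos_of_isPGroup (hH : IsPGroup p (Multiplicative H)) (g : H) :
    0 < addOrderOf g := by
  obtain ⟨a, ha⟩ := exists_addOrderOf_eq_pow hH g
  exact ha ▸ pow_pos (Fact.out : p.Prime).pos a

theorem addOrderOf_dvd_of_le (hH : IsPGroup p (Multiplicative H)) {g h : H}
    (hle : addOrderOf g ≤ addOrderOf h) : addOrderOf g ∣ addOrderOf h := by
  obtain ⟨a, ha⟩ := exists_addOrderOf_eq_pow hH g
  obtain ⟨c, hc⟩ := exists_addOrderOf_eq_pow hH h
  rw [ha, hc] at hle ⊢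
  exact pow_dvd_pow p ((Nat.pow_le_pow_iff_right (Fact.out : p.Prime).one_lt).1 hle)

variable {R : Type*} [CommRing R] [CharP R p]

theorem oneSub_pow_addOrderOf (hH : IsPGroup p (Multiplicative H)) (g : H) :
    oneSub R g ^ addOrderOf g = 0 := by
  obtain ⟨a, ha⟩ := exists_addOrderOf_eq_pow hH g
  rw [ha, oneSub_pow_char_pow, ← ha, addOrderOf_nsmul_eq_zero, oneSub_zero]

theorem weightIdeal_eq_bot (hH : IsPGroup p (Multiplicative H)) {b : ι → H} {w : ℚ}
    (hw : kStar (fun i => addOrderOf (b i)) < w) : weightIdeal R b w = ⊥ := by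
  rw [weightIdeal, Ideal.span_eq_bot]
  rintro _ ⟨m, hm, rfl⟩
  obtain ⟨i, -, hi⟩ := Finset.exists_lt_of_sum_lt (hw.trans_le hm)
  have hpos : (0 : ℚ) < addOrderOf (b i) := mod_cast addOrderOf_pos_of_isPGroup hH (b i)
  have hle : addOrderOf (b i) ≤ m i := by
    rw [div_lt_div_iff_of_pos_right hpos, sub_lt_iff_lt_add] at hi
    exact Nat.lt_succ_iff.1 (mod_cast hi)
  exact Finset.prod_eq_zero (Finset.mem_univ i)
    (pow_eq_zero_of_le hle (oneSub_pow_addOrderOf hH (b i)))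

theorem oneSub_nsmul_mem_weightIdeal (hH : IsPGroup p (Multiplicative H)) (b : ι → H) (i : ι)
    (c : ℕ) : oneSub R (c • b i) ∈ weightIdeal R b (1 / addOrderOf (c • b i)) := by
  have hp : p.Prime := Fact.out
  have hpos := addOrderOf_pos_of_isPGroup hH (b i)
  obtain ⟨a, ha⟩ := exists_addOrderOf_eq_pow hH (b i)
  obtain ⟨t, -, ht⟩ : ∃ t ≤ a, (addOrderOf (b i)).gcd c = p ^ t :=
    (Nat.dvd_prime_pow hp).1 (ha ▸ Nat.gcd_dvd_left _ _)
  have hweight : (1 : ℚ) / addOrderOf (c • b i) = (p ^ t : ℕ) / addOrderOf (b i) := by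
    rw [(addOrderOf_pos_iff.1 hpos).addOrderOf_nsmul, ht,
      Nat.cast_div (ht ▸ Nat.gcd_dvd_left _ _) (mod_cast pow_ne_zero t hp.ne_zero), one_div_div]
  obtain ⟨d, hd⟩ : p ^ t ∣ c := ht ▸ Nat.gcd_dvd_right _ _
  rw [hweight, hd, mul_comm, mul_smul]
  apply oneSub_nsmul_mem
  rw [← oneSub_pow_char_pow]
  exact oneSub_pow_mem_weightIdeal b i (p ^ t)

variable {b : ι → H}

theorem oneSub_mem_weightIdeal (hH : IsPGroup p (Multiplicative H)) (hb : IsBasis b) (g : H) :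
    oneSub R g ∈ weightIdeal R b (1 / addOrderOf g) := by
  obtain ⟨c, hc⟩ := hb.exists_sum_eq g
  suffices h : ∀ i, oneSub R (c i • b i) ∈ weightIdeal R b (1 / addOrderOf g) by
    have hmem := oneSub_sum_mem (t := .univ) fun i _ => h i
    rwa [hc] at hmem
  refine fun i => weightIdeal_antitone b ?_ (oneSub_nsmul_mem_weightIdeal hH b i (c i))
  have hle : addOrderOf (c i • b i) ≤ addOrderOf g :=
    Nat.le_of_dvd (addOrderOf_pos_of_isPGroup hH g) (hc ▸ hb.isIndependent.addOrderOf_nsmul_dvd c i)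
  exact one_div_le_one_div_of_le (mod_cast addOrderOf_pos_of_isPGroup hH _) (mod_cast hle)

theorem prod_oneSub_mem_weightIdeal (hH : IsPGroup p (Multiplicative H)) (hb : IsBasis b)
    (S : Multiset H) :
    (S.map (oneSub R)).prod ∈ weightIdeal R b (crossNum S) := by
  induction S using Multiset.induction_on with
  | empty => simpa [crossNum] using one_mem_weightIdeal_zero b
  | cons g S ih =>
    rw [Multiset.map_cons, Multiset.prod_cons, crossNum_cons]
    exact mul_mem_weightIdeal_add (oneSub_mem_weightIdeal hH hb g) ih

theorem IsZeroSumFree.crossNum_le_kStar (hH : IsPGroup p (Multiplicative H)) (hb : IsBasis b)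
    {S : Multiset H} (hS : IsZeroSumFree S) : crossNum S ≤ kStar fun i => addOrderOf (b i) := by
  by_contra! h
  have hmem := prod_oneSub_mem_weightIdeal (R := ZMod p) hH hb S
  rw [weightIdeal_eq_bot hH h, Ideal.mem_bot] at hmem
  exact hS.prod_oneSub_ne_zero hmem

theorem IsMinZeroSum.crossNum_le_kStar [Finite H] (hH : IsPGroup p (Multiplicative H))
    (hb : IsBasis b) {S : Multiset H} (hS : IsMinZeroSum S) :
    crossNum S ≤ 1 / (AddMonoid.exponent H : ℚ) + kStar fun i => addOrderOf (b i) := by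
  obtain ⟨z, hz, hmax⟩ := S.exists_max_image addOrderOf hS.1
  obtain ⟨S, rfl⟩ := Multiset.exists_cons_of_mem hz
  obtain ⟨x, hx⟩ := AddMonoid.exists_addOrderOf_eq_exponent (G := H) .of_finite
  obtain ⟨q, hq⟩ := AddMonoid.addOrder_dvd_exponent z
  have hkill : ∀ g ∈ S, addOrderOf z • g = 0 := fun g hg =>
    addOrderOf_dvd_iff_nsmul_eq_zero.1
      (addOrderOf_dvd_of_le hH (hmax g (Multiset.mem_cons_of_mem hg)))
  have hfree := hS.isZeroSumFree_of_cons.replicate_add (addOrderOf_pos_of_isPGroup hH z).ne' hkill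
    (hx.trans hq)
  have hbound := hfree.crossNum_le_kStar hH hb
  rw [crossNum_add, crossNum_replicate, hx, hq] at hbound
  have hz0 : (addOrderOf z : ℚ) ≠ 0 := mod_cast (addOrderOf_pos_of_isPGroup hH z).ne'
  have hq0 : q ≠ 0 := fun h => by simp [h, AddMonoid.exponent_ne_zero_of_finite] at hq
  rw [crossNum_cons, hq]
  have hswap : ((q - 1 : ℕ) : ℚ) / (addOrderOf z * q : ℕ) =
      1 / addOrderOf z - 1 / (addOrderOf z * q : ℕ) := by
    push_cast [Nat.one_le_iff_ne_zero.2 hq0]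
    field_simp
  linarith

end PGroup

section Weight

variable {α : Type*}

/-- The total weight of a sequence with respect to a weight function on its terms, generalising
the cross number (`v g = 1 / addOrderOf g`). -/
def weight (v : α → ℚ) (S : Multiset α) : ℚ :=
  (S.map v).sum

theorem weight_cons (v : α → ℚ) (a : α) (S : Multiset α) :
    weight v (a ::ₘ S) = v a + weight v S := by
  simp [weight]

theorem weight_add (v : α → ℚ) (S T : Multiset α) :
    weight v (S + T) = weight v S + weight v T := by
  simp [weight]

theorem alternatingSum_le_of_even {L : List ℚ} (hL : L.Pairwise (· ≥ ·)) (heven : Even L.length)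
    {m M : ℚ} (hm : ∀ x ∈ L, m ≤ x) (hM : ∀ x ∈ L, x ≤ M) (hmM : m ≤ M) :
    L.alternatingSum ≤ M - m := by
  induction L using List.twoStepInduction generalizing M with
  | nil => simpa using hmM
  | singleton x => simp at heven
  | cons_cons x y l ih _ =>
    simp only [List.forall_mem_cons, List.pairwise_cons] at hL hm hM
    have htail : l.alternatingSum ≤ y - m :=
      ih hL.2.2 (by simpa [Nat.even_add_one] using heven) hm.2.2 hL.2.1 hm.2.1
    rw [List.alternatingSum_cons_cons]
    linarith [hM.1]

end Weight

section Merging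

variable {G U : Type*} [AddCommGroup G] [AddCommGroup U]

theorem IsMinZeroSum.sum_cons {t R : Multiset G} (ht : t ≠ 0) (h : IsMinZeroSum (t + R)) :
    IsMinZeroSum (t.sum ::ₘ R) := by
  obtain ⟨-, hsum, hmin⟩ := h
  refine ⟨by simp, by simpa using hsum, fun T hT hT0 hTsum => ?_⟩
  by_cases hmem : t.sum ∈ T
  · obtain ⟨T, rfl⟩ := Multiset.exists_cons_of_mem hmem
    exact hmin (t + T) (by simpa using hT) (by simp [ht]) (by simpa using hTsum)
  · have hTR : T ≤ R := (Multiset.le_cons_of_notMem hmem).1 hT.le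
    exact hmin T (hTR.trans_lt (by simpa [pos_iff_ne_zero] using ht)) hT0 hTsum

theorem IsMinZeroSum.map_sum_add {P : Multiset (Multiset G)} (hP : ∀ t ∈ P, t ≠ 0)
    {R : Multiset G} (h : IsMinZeroSum (P.join + R)) :
    IsMinZeroSum (P.map Multiset.sum + R) := by
  induction P using Multiset.induction_on generalizing R with
  | empty => simpa using h
  | cons t P ih =>
    rw [Multiset.join_cons, add_assoc] at h
    rw [Multiset.map_cons, Multiset.cons_add, ← Multiset.add_cons]
    refine ih (fun s hs => hP s (Multiset.mem_cons_of_mem hs)) ?_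
    rw [Multiset.add_cons]
    exact h.sum_cons (hP t (Multiset.mem_cons_self t P))

/-- The blocks of a partial partition of a sequence are nonempty and have sum in the kernel of
`π`, so that replacing each block by its sum moves the sequence towards `ker π`. -/
def IsKernelBlocks (π : G →+ U) (P : Multiset (Multiset G)) : Prop :=
  ∀ t ∈ P, t ≠ 0 ∧ π t.sum = 0

/-- An ultrametric weight function with values in `[ε, 1]`. -/
structure IsUltrametricWeight (v : G → ℚ) (ε : ℚ) : Prop where
  min_le_add : ∀ x y, min (v x) (v y) ≤ v (x + y)
  le_apply : ∀ x, ε ≤ v x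
  apply_le_one : ∀ x, v x ≤ 1

/-- A list of elements of the fiber of `π` over `u`, in order of decreasing weight. -/
structure IsSortedFiber (π : G →+ U) (v : G → ℚ) (u : U) (L : List G) : Prop where
  sorted : L.Pairwise fun a b => v b ≤ v a
  map_eq : ∀ a ∈ L, π a = u

variable {π : G →+ U} {v : G → ℚ} {ε : ℚ} {u u₁ u₂ u₃ : U}

theorem IsKernelBlocks.add {P Q : Multiset (Multiset G)} (hP : IsKernelBlocks π P)
    (hQ : IsKernelBlocks π Q) : IsKernelBlocks π (P + Q) := fun t ht =>
  (Multiset.mem_add.1 ht).elim (hP t) (hQ t)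

theorem IsKernelBlocks.cons {t : Multiset G} {P : Multiset (Multiset G)} (ht : t ≠ 0)
    (htπ : π t.sum = 0) (hP : IsKernelBlocks π P) : IsKernelBlocks π (t ::ₘ P) :=
  Multiset.forall_mem_cons.2 ⟨⟨ht, htπ⟩, hP⟩

theorem IsKernelBlocks.weight_le {K : ℚ}
    (hK : ∀ T, (∀ a ∈ T, π a = 0) → IsMinZeroSum T → weight v T ≤ K)
    {P : Multiset (Multiset G)} (hP : IsKernelBlocks π P) {R : Multiset G}
    (hR : ∀ a ∈ R, π a = 0) (h : IsMinZeroSum (P.join + R)) :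
    weight v (P.map Multiset.sum) + weight v R ≤ K := by
  rw [← weight_add]
  refine hK _ (fun a ha => ?_) (h.map_sum_add fun t ht => (hP t ht).1)
  rcases Multiset.mem_add.1 ha with ha | ha
  · obtain ⟨t, ht, rfl⟩ := Multiset.mem_map.1 ha
    exact (hP t ht).2
  · exact hR a ha

theorem IsSortedFiber.of_cons {a : G} {L : List G} (h : IsSortedFiber π v u (a :: L)) :
    IsSortedFiber π v u L where
  sorted := List.Pairwise.of_cons h.sorted
  map_eq b hb := h.map_eq b (List.mem_cons_of_mem a hb)

theorem IsSortedFiber.map_head {a : G} {L : List G} (h : IsSortedFiber π v u (a :: L)) :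
    π a = u :=
  h.map_eq a List.mem_cons_self

theorem exists_isSortedFiber (v : G → ℚ) {M : Multiset G} (hM : ∀ a ∈ M, π a = u) :
    ∃ L : List G, (L : Multiset G) = M ∧ IsSortedFiber π v u L := by
  set L := M.toList.mergeSort (fun a b => v b ≤ v a)
  have hLM : (L : Multiset G) = M :=
    (Multiset.coe_eq_coe.2 (List.mergeSort_perm _ _)).trans M.coe_toList
  refine ⟨L, hLM, ?_, fun a ha => hM a (hLM ▸ Multiset.mem_coe.2 ha)⟩
  simpa using List.pairwise_mergeSort (le := fun a b => decide (v b ≤ v a))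
    (fun a b c => by simpa using fun hab hbc => hbc.trans hab)
    (fun a b => by simpa using le_total (v b) (v a)) M.toList

theorem IsKernelBlocks.exists_pairs (hv : IsUltrametricWeight v ε) (hu : u + u = 0)
    {L : List G} (hL : IsSortedFiber π v u L) :
    ∃ P ρ, IsKernelBlocks π P ∧ P.join + ρ = L ∧ ρ.card = L.length % 2 ∧
      weight v L ≤ 2 * weight v (P.map Multiset.sum) + (L.map v).alternatingSum := by
  induction L using List.twoStepInduction with
  | nil => exact ⟨0, 0, by simp [IsKernelBlocks], by simp, by simp, by simp [weight]⟩
  | singleton x => exact ⟨0, {x}, by simp [IsKernelBlocks], by simp, by simp, by simp [weight]⟩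
  | cons_cons x y l ih _ =>
    obtain ⟨P, ρ, hP, hjoin, hcard, hw⟩ := ih hL.of_cons.of_cons
    have hπ : π ({x, y} : Multiset G).sum = 0 := by
      simp [hL.map_head, hL.of_cons.map_head, hu]
    refine ⟨{x, y} ::ₘ P, ρ, hP.cons (by simp) hπ, ?_, ?_, ?_⟩
    · simp [hjoin, ← Multiset.cons_coe]
    · simpa [add_assoc] using hcard
    · have hxy : v y ≤ v (x + y) := by
        simpa [List.rel_of_pairwise_cons hL.sorted] using hv.min_le_add x y
      simp only [← Multiset.cons_coe, weight_cons, Multiset.map_cons, List.map_cons,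
        List.alternatingSum_cons_cons, Multiset.insert_eq_cons, Multiset.sum_cons,
        Multiset.sum_singleton]
      linarith

theorem IsKernelBlocks.exists_pairs_triple (hv : IsUltrametricWeight v ε)
    (hu : ∀ u : U, u + u = 0) (hsum : u₁ + u₂ + u₃ = 0) {A B C : List G}
    (hA : IsSortedFiber π v u₁ A) (hB : IsSortedFiber π v u₂ B) (hC : IsSortedFiber π v u₃ C)
    (hAB : A.length % 2 = B.length % 2) (hAC : A.length % 2 = C.length % 2) :
    ∃ P, IsKernelBlocks π P ∧ P.join = (A + B + C : Multiset G) ∧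
      weight v A + weight v B + weight v C + 2 * ε * (A.length % 2 : ℕ) ≤
        2 * weight v (P.map Multiset.sum) + (A.map v).alternatingSum +
          (B.map v).alternatingSum + (C.map v).alternatingSum := by
  obtain ⟨P, ρ, hP, hPjoin, hPcard, hPw⟩ := exists_pairs hv (hu u₁) hA
  obtain ⟨Q, σ, hQ, hQjoin, hQcard, hQw⟩ := exists_pairs hv (hu u₂) hB
  obtain ⟨R, τ, hR, hRjoin, hRcard, hRw⟩ := exists_pairs hv (hu u₃) hC
  rw [← hAB] at hQcard
  rw [← hAC] at hRcard
  rcases Nat.mod_two_eq_zero_or_one A.length with h | h <;> rw [h] at hPcard hQcard hRcard ⊢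
  · obtain rfl := Multiset.card_eq_zero.1 hPcard
    obtain rfl := Multiset.card_eq_zero.1 hQcard
    obtain rfl := Multiset.card_eq_zero.1 hRcard
    refine ⟨P + Q + R, (hP.add hQ).add hR, ?_, ?_⟩
    · simp only [Multiset.join_add, ← hPjoin, ← hQjoin, ← hRjoin, add_zero]
    · simp only [Multiset.map_add, weight_add, Nat.cast_zero]
      linarith
  · obtain ⟨x, rfl⟩ := Multiset.card_eq_one.1 hPcard
    obtain ⟨y, rfl⟩ := Multiset.card_eq_one.1 hQcard
    obtain ⟨z, rfl⟩ := Multiset.card_eq_one.1 hRcard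
    have hx : π x = u₁ := hA.map_eq x (Multiset.mem_coe.1 (hPjoin ▸ by simp))
    have hy : π y = u₂ := hB.map_eq y (Multiset.mem_coe.1 (hQjoin ▸ by simp))
    have hz : π z = u₃ := hC.map_eq z (Multiset.mem_coe.1 (hRjoin ▸ by simp))
    have hxyz : π ({x, y, z} : Multiset G).sum = 0 := by simp [hx, hy, hz, ← hsum, add_assoc]
    refine ⟨{x, y, z} ::ₘ (P + Q + R), ((hP.add hQ).add hR).cons (by simp) hxyz, ?_, ?_⟩
    · rw [Multiset.join_cons, Multiset.join_add, Multiset.join_add, ← hPjoin, ← hQjoin, ← hRjoin]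
      simp only [Multiset.insert_eq_cons, ← Multiset.singleton_add]
      abel
    · simp only [Multiset.map_cons, Multiset.map_add, weight_cons, weight_add, Nat.cast_one]
      linarith [hv.le_apply ({x, y, z} : Multiset G).sum]

theorem IsSortedFiber.alternatingSum_le (hv : IsUltrametricWeight v ε) {L : List G}
    (hL : IsSortedFiber π v u L) (heven : L.length % 2 = 0) :
    (L.map v).alternatingSum ≤ 1 - ε := by
  refine alternatingSum_le_of_even (List.pairwise_map.2 hL.sorted)
    (by simpa [Nat.even_iff] using heven) ?_ ?_ ((hv.le_apply 0).trans (hv.apply_le_one 0))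
  · exact List.forall_mem_map.2 fun x _ => hv.le_apply x
  · exact List.forall_mem_map.2 fun x _ => hv.apply_le_one x

theorem weight_le_of_exists_eq_nil (hv : IsUltrametricWeight v ε) {K : ℚ}
    (hK : ∀ T, (∀ a ∈ T, π a = 0) → IsMinZeroSum T → weight v T ≤ K)
    (hu : ∀ u : U, u + u = 0) (hsum : u₁ + u₂ + u₃ = 0) {A B C : List G}
    (hA : IsSortedFiber π v u₁ A) (hB : IsSortedFiber π v u₂ B) (hC : IsSortedFiber π v u₃ C)
    (hAB : A.length % 2 = B.length % 2) (hAC : A.length % 2 = C.length % 2)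
    (hnil : A = [] ∨ B = [] ∨ C = []) {R : Multiset G} (hR : ∀ a ∈ R, π a = 0)
    (h : IsMinZeroSum (A + B + C + R : Multiset G)) :
    (weight v A + weight v B + weight v C) / 2 + weight v R ≤ K + 1 - ε := by
  obtain ⟨P, hP, hPjoin, hPw⟩ := IsKernelBlocks.exists_pairs_triple hv hu hsum hA hB hC hAB hAC
  have hPK := hP.weight_le hK hR (hPjoin ▸ h)
  have hA0 : A.length % 2 = 0 := by
    rcases hnil with rfl | rfl | rfl
    exacts [rfl, hAB, hAC]
  have haltA := hA.alternatingSum_le hv hA0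
  have haltB := hB.alternatingSum_le hv (hAB ▸ hA0)
  have haltC := hC.alternatingSum_le hv (hAC ▸ hA0)
  simp only [hA0, Nat.cast_zero] at hPw
  rcases hnil with rfl | rfl | rfl <;> simp only [List.map_nil, List.alternatingSum_nil] at hPw <;>
    linarith

theorem weight_le_of_cons (hv : IsUltrametricWeight v ε) {K : ℚ}
    (hK : ∀ T, (∀ a ∈ T, π a = 0) → IsMinZeroSum T → weight v T ≤ K)
    (hu : ∀ u : U, u + u = 0) (hsum : u₁ + u₂ + u₃ = 0) {a b c : G} {A B C : List G}
    (hA : IsSortedFiber π v u₁ (a :: A)) (hB : IsSortedFiber π v u₂ (b :: B))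
    (hC : IsSortedFiber π v u₃ (c :: C)) (hAB : A.length % 2 = B.length % 2)
    (hAC : A.length % 2 = C.length % 2) {R : Multiset G} (hR : ∀ a ∈ R, π a = 0)
    (h : IsMinZeroSum ((a ::ₘ A) + (b ::ₘ B) + (c ::ₘ C) + R)) :
    (weight v (a ::ₘ A) + weight v (b ::ₘ B) + weight v (c ::ₘ C)) / 2 + weight v R ≤
      K + 1 - ε / 2 := by
  -- Average the pairing of all terms with the one made after splitting off `{a, b, c}`: the lengths
  -- have opposite parities, so exactly one of the two contains a leftover triple, which gains `ε`.
  obtain ⟨P, hP, hPjoin, hPw⟩ := IsKernelBlocks.exists_pairs_triple hv hu hsum hA hB hC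
    (by simp only [List.length_cons]; omega) (by simp only [List.length_cons]; omega)
  obtain ⟨Q, hQ, hQjoin, hQw⟩ := IsKernelBlocks.exists_pairs_triple hv hu hsum hA.of_cons
    hB.of_cons hC.of_cons hAB hAC
  have hQ' : IsKernelBlocks π ({a, b, c} ::ₘ Q) := hQ.cons (by simp) (by
    simp [hA.map_head, hB.map_head, hC.map_head, ← hsum, add_assoc])
  have hQjoin' : (({a, b, c} : Multiset G) ::ₘ Q).join =
      (a ::ₘ A) + (b ::ₘ B) + (c ::ₘ C) := by
    rw [Multiset.join_cons, hQjoin]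
    simp only [Multiset.insert_eq_cons, ← Multiset.singleton_add]
    abel
  have hPK := hP.weight_le hK hR (hPjoin ▸ h)
  have hQK := hQ'.weight_le hK hR (hQjoin' ▸ h)
  have hparity : (((A.length + 1) % 2 : ℕ) : ℚ) + (A.length % 2 : ℕ) = 1 := by
    exact_mod_cast (by omega : (A.length + 1) % 2 + A.length % 2 = 1)
  have hheads : v a + v b + v c - v (a + (b + c)) ≤ 2 := by
    have hmin : v a ≤ v (a + (b + c)) ∨ v b ≤ v (a + (b + c)) ∨ v c ≤ v (a + (b + c)) := by
      simpa [min_le_iff] using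
        (min_le_min_left (v a) (hv.min_le_add b c)).trans (hv.min_le_add a (b + c))
    have ha := hv.apply_le_one a
    have hb := hv.apply_le_one b
    have hc := hv.apply_le_one c
    rcases hmin with h | h | h <;> linarith
  simp only [← Multiset.cons_coe, Multiset.map_cons, weight_cons, List.map_cons,
    List.alternatingSum_cons, List.length_cons, Multiset.insert_eq_cons, Multiset.sum_cons,
    Multiset.sum_singleton] at hPw hQw hQK ⊢
  linear_combination (hPw + hQw) / 4 + (hPK + hQK) / 2 + hheads / 2 - ε / 2 * hparity

theorem weight_le_of_three_fibers (hv : IsUltrametricWeight v ε) {K : ℚ}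
    (hK : ∀ T, (∀ a ∈ T, π a = 0) → IsMinZeroSum T → weight v T ≤ K)
    (hε : 0 ≤ ε) (hu : ∀ u : U, u + u = 0) (hsum : u₁ + u₂ + u₃ = 0) {A B C R : Multiset G}
    (hA : ∀ a ∈ A, π a = u₁) (hB : ∀ b ∈ B, π b = u₂) (hC : ∀ c ∈ C, π c = u₃)
    (hR : ∀ r ∈ R, π r = 0) (hAB : A.card % 2 = B.card % 2) (hAC : A.card % 2 = C.card % 2)
    (h : IsMinZeroSum (A + B + C + R)) :
    (weight v A + weight v B + weight v C) / 2 + weight v R ≤ K + 1 - ε / 2 := by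
  obtain ⟨A, rfl, hA'⟩ := exists_isSortedFiber v hA
  obtain ⟨B, rfl, hB'⟩ := exists_isSortedFiber v hB
  obtain ⟨C, rfl, hC'⟩ := exists_isSortedFiber v hC
  rw [Multiset.coe_card, Multiset.coe_card] at hAB hAC
  by_cases hnil : A = [] ∨ B = [] ∨ C = []
  · linarith [weight_le_of_exists_eq_nil hv hK hu hsum hA' hB' hC' hAB hAC hnil hR h]
  · simp only [not_or] at hnil
    obtain ⟨a, A, rfl⟩ := List.exists_cons_of_ne_nil hnil.1
    obtain ⟨b, B, rfl⟩ := List.exists_cons_of_ne_nil hnil.2.1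
    obtain ⟨c, C, rfl⟩ := List.exists_cons_of_ne_nil hnil.2.2
    simp only [List.length_cons] at hAB hAC
    exact weight_le_of_cons hv hK hu hsum hA' hB' hC' (by omega) (by omega) hR h

end Merging

section KleinFour

variable {H U : Type*} [AddCommGroup H] [AddCommGroup U] {p : ℕ} [Fact p.Prime]

/-- The weight on `U × H` which is the contribution of the component in `H` to the cross number. -/
noncomputable def sndWeight (U H : Type*) [AddCommGroup H] (g : U × H) : ℚ :=
  1 / (addOrderOf g.2 : ℚ)

theorem isUltrametricWeight_sndWeight [Finite H] (hH : IsPGroup p (Multiplicative H)) :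
    IsUltrametricWeight (sndWeight U H) (1 / AddMonoid.exponent H) := by
  have hpos (h : H) : (0 : ℚ) < addOrderOf h := mod_cast addOrderOf_pos h
  have hle {x y : H} (hxy : addOrderOf x ≤ addOrderOf y) :
      addOrderOf (x + y) ≤ addOrderOf y := by
    refine Nat.le_of_dvd (addOrderOf_pos y) ?_
    rw [← Nat.lcm_eq_right (addOrderOf_dvd_of_le hH hxy)]
    exact (AddCommute.all x y).addOrderOf_add_dvd_lcm
  have hexp (h : H) : addOrderOf h ≤ AddMonoid.exponent H :=
    Nat.le_of_dvd (Nat.pos_of_ne_zero AddMonoid.exponent_ne_zero_of_finite)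
      (AddMonoid.addOrder_dvd_exponent h)
  refine ⟨fun x y => ?_, fun x => ?_, fun x => ?_⟩
  · rw [min_le_iff]
    rcases le_total (addOrderOf x.2) (addOrderOf y.2) with hxy | hxy
    · exact .inr (one_div_le_one_div_of_le (hpos _) (mod_cast hle hxy))
    · exact .inl (one_div_le_one_div_of_le (hpos _) (mod_cast add_comm x y ▸ hle hxy))
  · exact one_div_le_one_div_of_le (hpos x.2) (mod_cast hexp x.2)
  · exact (div_le_one (hpos x.2)).2 (mod_cast addOrderOf_pos x.2)

theorem weight_sndWeight {U : Type*} (T : Multiset (U × H)) :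
    weight (sndWeight U H) T = crossNum (T.map Prod.snd) := by
  simp only [weight, crossNum, Multiset.map_map]
  rfl

theorem eq_map_inr_of_forall_fst_eq_zero {T : Multiset (U × H)} (hT : ∀ g ∈ T, g.1 = 0) :
    T = (T.map Prod.snd).map (AddMonoidHom.inr U H) := by
  rw [Multiset.map_map]
  conv_lhs => rw [← Multiset.map_id T]
  exact Multiset.map_congr rfl fun g hg => Prod.ext (hT g hg) rfl

theorem crossNum_eq_weight_sndWeight {T : Multiset (U × H)} (hT : ∀ g ∈ T, g.1 = 0) :
    crossNum T = weight (sndWeight U H) T := by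
  conv_lhs => rw [eq_map_inr_of_forall_fst_eq_zero hT]
  rw [weight_sndWeight]
  exact crossNum_map (f := AddMonoidHom.inr U H) (Prod.mk_right_injective 0) _

theorem addOrderOf_eq_two_mul {g : U × H} (hg : g.1 ≠ 0) (htwo : 2 • g.1 = 0)
    (hodd : Odd (addOrderOf g.2)) : addOrderOf g = 2 * addOrderOf g.2 := by
  have : Fact (Nat.Prime 2) := ⟨Nat.prime_two⟩
  rw [Prod.addOrderOf, addOrderOf_eq_prime htwo hg,
    (Nat.coprime_two_left.2 hodd).lcm_eq_mul]

theorem crossNum_eq_weight_sndWeight_div_two (hodd : ∀ h : H, Odd (addOrderOf h)) {u : U}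
    (hu : u ≠ 0) (htwo : 2 • u = 0) {T : Multiset (U × H)} (hT : ∀ g ∈ T, g.1 = u) :
    crossNum T = weight (sndWeight U H) T / 2 := by
  rw [crossNum, weight, ← Multiset.sum_map_div]
  refine congrArg _ (Multiset.map_congr rfl fun g hg => ?_)
  rw [addOrderOf_eq_two_mul (hT g hg ▸ hu) (hT g hg ▸ htwo) (hodd g.2), sndWeight, div_div,
    Nat.cast_mul, mul_comm, Nat.cast_ofNat]

theorem filter_kleinFour_add {α : Type*} (f : α → ZMod 2 × ZMod 2) (S : Multiset α) :
    S.filter (f · = (1, 0)) + S.filter (f · = (0, 1)) + S.filter (f · = (1, 1)) +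
      S.filter (f · = 0) = S := by
  classical
  ext a
  simp only [Multiset.count_add, Multiset.count_filter]
  have hu : ∀ u : ZMod 2 × ZMod 2, u = (1, 0) ∨ u = (0, 1) ∨ u = (1, 1) ∨ u = (0, 0) := by decide
  rcases hu (f a) with h | h | h | h <;> simp [h, Prod.zero_eq_mk]

theorem card_filter_fst_mod_two {S : Multiset ((ZMod 2 × ZMod 2) × H)} (hS : S.sum = 0) :
    (S.filter (·.1 = (1, 0))).card % 2 = (S.filter (·.1 = (0, 1))).card % 2 ∧
      (S.filter (·.1 = (1, 0))).card % 2 = (S.filter (·.1 = (1, 1))).card % 2 := by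
  have hfib (u : ZMod 2 × ZMod 2) :
      (S.filter (·.1 = u)).sum.1 = (S.filter (·.1 = u)).card • u := by
    rw [← AddMonoidHom.coe_fst, map_multiset_sum, Multiset.map_congr rfl
      fun g hg => (Multiset.mem_filter.1 hg).2, Multiset.map_const', Multiset.sum_replicate]
  have hfst := congrArg Prod.fst hS
  rw [← filter_kleinFour_add Prod.fst S] at hfst
  simp only [Multiset.sum_add, Prod.fst_add, hfib] at hfst
  generalize (S.filter (·.1 = (1, 0))).card = a, (S.filter (·.1 = (0, 1))).card = b,
    (S.filter (·.1 = (1, 1))).card = c at hfst ⊢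
  have hac : ((a + c : ℕ) : ZMod 2) = 0 := by simpa using congrArg Prod.fst hfst
  have hbc : ((b + c : ℕ) : ZMod 2) = 0 := by simpa using congrArg Prod.snd hfst
  rw [ZMod.natCast_eq_zero_iff] at hac hbc
  omega

theorem IsMinZeroSum.crossNum_le_kleinFour [Finite H] (hH : IsPGroup p (Multiplicative H))
    (hodd : Odd p) {K : ℚ} (hK : ∀ T : Multiset H, IsMinZeroSum T → crossNum T ≤ K)
    {S : Multiset ((ZMod 2 × ZMod 2) × H)} (hS : IsMinZeroSum S) :
    crossNum S ≤ K + 1 - 1 / AddMonoid.exponent H / 2 := by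
  have htwo (u : ZMod 2 × ZMod 2) : u + u = 0 := by revert u; decide
  have hker (T : Multiset ((ZMod 2 × ZMod 2) × H)) (hT : ∀ g ∈ T, AddMonoidHom.fst _ H g = 0)
      (hTmin : IsMinZeroSum T) : weight (sndWeight _ H) T ≤ K := by
    rw [eq_map_inr_of_forall_fst_eq_zero hT] at hTmin
    exact (weight_sndWeight T).trans_le (hK _ (hTmin.of_map (Prod.mk_right_injective 0)))
  have hfib (u : ZMod 2 × ZMod 2) : ∀ g ∈ S.filter (·.1 = u), AddMonoidHom.fst _ H g = u :=
    fun g hg => (Multiset.mem_filter.1 hg).2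
  have hhalf {u : ZMod 2 × ZMod 2} (hu : u ≠ 0) : crossNum (S.filter (·.1 = u)) =
      weight (sndWeight _ H) (S.filter (·.1 = u)) / 2 := by
    refine crossNum_eq_weight_sndWeight_div_two (fun h => ?_) hu (two_nsmul u ▸ htwo u) (hfib u)
    obtain ⟨a, ha⟩ := exists_addOrderOf_eq_pow hH h
    exact ha ▸ hodd.pow
  obtain ⟨hAB, hAC⟩ := card_filter_fst_mod_two hS.2.1
  have hsplit := filter_kleinFour_add Prod.fst S
  have hbound := weight_le_of_three_fibers (isUltrametricWeight_sndWeight hH) hker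
    (by positivity) htwo (by decide) (hfib (1, 0)) (hfib (0, 1)) (hfib (1, 1)) (hfib 0) hAB hAC
    (hsplit.symm ▸ hS)
  rw [← hsplit, crossNum_add, crossNum_add, crossNum_add, hhalf (by decide), hhalf (by decide),
    hhalf (by decide), crossNum_eq_weight_sndWeight (hfib 0), ← add_div, ← add_div]
  exact hbound

end KleinFour

section Assembly

variable {ι H : Type*} [Fintype ι] [AddCommGroup H] {p : ℕ} [Fact p.Prime]

theorem exponent_kleinFour_prod [Finite H] (hH : IsPGroup p (Multiplicative H)) (hodd : Odd p) :
    AddMonoid.exponent ((ZMod 2 × ZMod 2) × H) = 2 * AddMonoid.exponent H := by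
  obtain ⟨x, hx⟩ := AddMonoid.exists_addOrderOf_eq_exponent (G := H) .of_finite
  obtain ⟨a, ha⟩ := exists_addOrderOf_eq_pow hH x
  have hcop : Nat.Coprime 2 (AddMonoid.exponent H) :=
    Nat.coprime_two_left.2 (hx ▸ ha ▸ hodd.pow)
  rw [AddMonoid.exponent_prod, AddMonoid.exponent_prod, ZMod.exponent, lcm_same, normalize_eq]
  exact hcop.lcm_eq_mul

theorem IsBasis.isGreatest_WSet_kleinFour [Finite H] {b : ι → H} (hb : IsBasis b)
    (hH : IsPGroup p (Multiplicative H)) (hodd : Odd p) :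
    IsGreatest (WSet ((ZMod 2 × ZMod 2) × H))
      (1 / (AddMonoid.exponent ((ZMod 2 × ZMod 2) × H) : ℚ) +
        (1 / 2 + 1 / 2 + kStar fun i => addOrderOf (b i))) := by
  constructor
  · have hmem := (((isBasis_one 2).sumElim (isBasis_one 2)).sumElim hb).mem_WSet
    rw [kStar_sumElim, kStar_sumElim] at hmem
    have htwo : kStar (fun _ : Unit => addOrderOf (1 : ZMod 2)) = 1 / 2 := by
      norm_num [kStar, ZMod.addOrderOf_one]
    rwa [htwo] at hmem
  · rintro _ ⟨S, hS, rfl⟩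
    have hbound := hS.crossNum_le_kleinFour hH hodd fun T hT => hT.crossNum_le_kStar hH hb
    rw [exponent_kleinFour_prod hH hodd]
    push_cast
    rw [one_div, mul_inv, ← one_div, ← one_div]
    linarith

end Assembly

theorem stmt11 (p : ℕ) (hp : p.Prime) (hodd : Odd p)
    (Gp : Type*) [AddCommGroup Gp] [Fintype Gp]
    (hGp : ∃ m : ℕ, Fintype.card Gp = p ^ m)
    (s : ℕ) (k : Fin s → ℕ) (hk : ∀ i, 1 ≤ k i)
    (e : Gp ≃+ ∀ i, ZMod (p ^ k i)) :
    IsGreatest (WSet (ZMod 2 × ZMod 2 × Gp))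
      (1 / (AddMonoid.exponent (ZMod 2 × ZMod 2 × Gp) : ℚ) +
        ((1 : ℚ) / 2 + (1 : ℚ) / 2 +
          ∑ i, ((p ^ k i : ℚ) - 1) / (p ^ k i : ℚ))) := by
  have : Fact p.Prime := ⟨hp⟩
  have hcard : Nat.card (∀ i, ZMod (p ^ k i)) = p ^ ∑ i, k i := by
    simp [Finset.prod_pow_eq_pow_sum]
  have hH : IsPGroup p (Multiplicative (∀ i, ZMod (p ^ k i))) := .of_card hcard
  let E : ZMod 2 × ZMod 2 × Gp ≃+ (ZMod 2 × ZMod 2) × ∀ i, ZMod (p ^ k i) :=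
    AddEquiv.prodAssoc.symm.trans ((AddEquiv.refl _).prodCongr e)
  rw [WSet_congr E, AddMonoid.exponent_eq_of_addEquiv E]
  simpa [kStar, addOrderOf_piSingle, ZMod.addOrderOf_one] using
    (isBasis_piSingle_one fun i => p ^ k i).isGreatest_WSet_kleinFour hH hodd
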